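/- arXiv:1505.04520 — 3 statements merged into one kernel-verified Lean document; each statement's English description precedes it below -/
import Mathlib

section
/- For positive semidefinite operators A and B on a Hilbert space, the operator norm satisfies ‖A B‖ ≤ (1/4) ‖A + B‖². -/
open Filter Topology

namespace ContinuousLinearMap

variable {H : Type*} [NormedAddCommGroup H] [InnerProductSpace ℂ H]

lemma re_inner_apply_self_le (T : H →L[ℂ] H) (x : H) :
    (inner ℂ (T x) x).re ≤ ‖T‖ * ‖x‖ ^ 2 :=
  calc (inner ℂ (T x) x).re ≤ ‖T x‖ * ‖x‖ := re_inner_le_norm (𝕜 := ℂ) _ _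
    _ ≤ ‖T‖ * ‖x‖ * ‖x‖ := by gcongr; exact T.le_opNorm x
    _ = ‖T‖ * ‖x‖ ^ 2 := by ring

lemma IsPositive.re_inner_comm {A : H →L[ℂ] H} (hA : A.IsPositive) (x y : H) :
    (inner ℂ (A x) y).re = (inner ℂ (A y) x).re := by
  rw [hA.isSymmetric.apply_clm x y]
  exact inner_re_symm (𝕜 := ℂ) _ _

lemma IsPositive.norm_add_apply_sq_le {A B : H →L[ℂ] H} (hA : A.IsPositive) (hB : B.IsPositive)
    (u v : H) :
    ‖A u + B v‖ ^ 2 ≤ ‖A + B‖ * ((inner ℂ (A u) u).re + (inner ℂ (B v) v).re) := by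
  set z := A u + B v with hz
  set S := (inner ℂ (A u) u).re + (inner ℂ (B v) v).re with hS
  have hzz : (inner ℂ (A u) z).re + (inner ℂ (B v) z).re = ‖z‖ ^ 2 := by
    rw [← Complex.add_re, ← inner_add_left, ← hz]
    exact inner_self_eq_norm_sq (𝕜 := ℂ) z
  have hT : (inner ℂ (A z) z).re + (inner ℂ (B z) z).re ≤ ‖A + B‖ * ‖z‖ ^ 2 := by
    simpa [inner_add_left] using re_inner_apply_self_le (A + B) z
  have hquad (c : ℝ) : 0 ≤ S * (c * c) + (-2 * ‖z‖ ^ 2) * c + ‖A + B‖ * ‖z‖ ^ 2 := by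
    have h1 : 0 ≤ (inner ℂ (A ((c : ℂ) • u - z)) ((c : ℂ) • u - z)).re :=
      hA.re_inner_nonneg_left _
    have h2 : 0 ≤ (inner ℂ (B ((c : ℂ) • v - z)) ((c : ℂ) • v - z)).re :=
      hB.re_inner_nonneg_left _
    simp only [map_sub, map_smul, inner_sub_left, inner_sub_right, inner_smul_left,
      inner_smul_right, Complex.conj_ofReal, Complex.sub_re, Complex.re_ofReal_mul] at h1 h2
    rw [hA.re_inner_comm z u] at h1
    rw [hB.re_inner_comm z v] at h2
    rw [hS]
    linear_combination h1 + h2 + hT - 2 * c * hzz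
  have hd := discrim_le_zero hquad
  rw [discrim] at hd
  rcases (sq_nonneg ‖z‖).eq_or_lt with h0 | h0
  · rw [← h0]
    exact mul_nonneg (norm_nonneg _)
      (add_nonneg (hA.re_inner_nonneg_left u) (hB.re_inner_nonneg_left v))
  · exact le_of_mul_le_mul_right (by linarith) h0

lemma IsPositive.re_inner_apply_apply_add_le {A B : H →L[ℂ] H} (hA : A.IsPositive)
    (hB : B.IsPositive) (u v : H) :
    (inner ℂ ((A + B) (A u)) (B v)).re ≤
      1 / 4 * ‖A + B‖ ^ 2 * ((inner ℂ (A u) u).re + (inner ℂ (B v) v).re) := by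
  have hT := hA.add hB
  have h1 : 0 ≤ (inner ℂ ((A + B) (A u - B v)) (A u - B v)).re := hT.re_inner_nonneg_left _
  have h2 := re_inner_apply_self_le (A + B) (A u + B v)
  have h3 := mul_le_mul_of_nonneg_left (hA.norm_add_apply_sq_le hB u v) (norm_nonneg (A + B))
  have h4 := hT.re_inner_comm (B v) (A u)
  generalize A + B = T at *
  simp only [map_sub, map_add, inner_sub_left, inner_sub_right, inner_add_left,
    inner_add_right, Complex.sub_re, Complex.add_re] at h1 h2
  linarith

/-- If `‖A * B‖` exceeds `‖A + B‖ ^ 2 / 4`, then the norm of `B * A` at unit vectors stays away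
from `‖A * B‖`. -/
lemma IsPositive.gap_mul_norm_sq_le {A B : H →L[ℂ] H} (hA : A.IsPositive)
    (hB : B.IsPositive) (hl0 : 0 < ‖A * B‖) (hd0 : 0 ≤ ‖A * B‖ - 1 / 4 * ‖A + B‖ ^ 2)
    {u : H} (hu : ‖u‖ ≤ 1) :
    ((‖A * B‖ - 1 / 4 * ‖A + B‖ ^ 2) * ‖A * B‖ ^ 2 * ‖B (A u)‖ ^ 2) ^ 2 ≤
      (‖B‖ ^ 2 * ‖A‖ ^ 2 * ‖A * B‖) ^ 2 *
        (‖A * B‖ ^ 2 * (‖A * B‖ ^ 2 - ‖B (A u)‖ ^ 2)) := by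
  set l := ‖A * B‖
  set d := l - 1 / 4 * ‖A + B‖ ^ 2 with hd
  set v := B (A u) with hv
  set x := (l : ℂ) • u with hx
  set e := A (B v) - (l : ℂ) • x with he
  have hBx : B (A x) = (l : ℂ) • v := by simp [hx, hv]
  have hxn : ‖x‖ ≤ l := by
    rw [hx, norm_smul, Complex.norm_real, Real.norm_of_nonneg hl0.le]
    exact mul_le_of_le_one_right hl0.le hu
  have hABv : ‖A (B v)‖ ≤ l * ‖v‖ := (A * B).le_opNorm v
  have hinner : (inner ℂ (A (B v)) u).re = ‖v‖ ^ 2 := by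
    rw [hA.isSymmetric.apply_clm, hB.isSymmetric.apply_clm, ← hv]
    exact inner_self_eq_norm_sq (𝕜 := ℂ) v
  have he2 : ‖e‖ ^ 2 ≤ l ^ 2 * (l ^ 2 - ‖v‖ ^ 2) := by
    have h1 : ‖e‖ ^ 2 = ‖A (B v)‖ ^ 2 - 2 * (inner ℂ (A (B v)) ((l : ℂ) • x)).re
        + ‖(l : ℂ) • x‖ ^ 2 := norm_sub_sq (𝕜 := ℂ) _ _
    have h2 : (inner ℂ (A (B v)) ((l : ℂ) • x)).re = l * (l * ‖v‖ ^ 2) := by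
      rw [hx, inner_smul_right, inner_smul_right, Complex.re_ofReal_mul,
        Complex.re_ofReal_mul, hinner]
    have h3 : ‖(l : ℂ) • x‖ ≤ l * l := by
      rw [norm_smul, Complex.norm_real, Real.norm_of_nonneg hl0.le]
      gcongr
    have h4 : ‖(l : ℂ) • x‖ ^ 2 ≤ (l * l) ^ 2 := by gcongr
    have h5 : ‖A (B v)‖ ^ 2 ≤ (l * ‖v‖) ^ 2 := by gcongr
    rw [h1, h2]
    linarith
  have hmain := hA.re_inner_apply_apply_add_le hB x v
  have hexp : (inner ℂ ((A + B) (A x)) (B v)).re =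
      l * (inner ℂ (A x) x).re + (inner ℂ (A x) e).re + l * (inner ℂ (B v) v).re := by
    have hAB : A (B v) = (l : ℂ) • x + e := by rw [he]; abel
    rw [add_apply, inner_add_left, Complex.add_re,
      hA.isSymmetric.apply_clm (A x) (B v), hAB, hBx, inner_add_right, inner_smul_right,
      inner_smul_left, Complex.conj_ofReal, Complex.add_re, Complex.re_ofReal_mul,
      Complex.re_ofReal_mul, hB.isSymmetric.apply_clm v v]
  have herr : -(inner ℂ (A x) e).re ≤ ‖A‖ * l * ‖e‖ :=
    calc -(inner ℂ (A x) e).re ≤ ‖inner ℂ (A x) e‖ :=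
          (neg_le_abs _).trans (Complex.abs_re_le_norm _)
      _ ≤ ‖A x‖ * ‖e‖ := norm_inner_le_norm _ _
      _ ≤ ‖A‖ * l * ‖e‖ := by
        gcongr
        exact A.le_opNorm_of_le hxn
  have hb : 0 ≤ d * (inner ℂ (B v) v).re := mul_nonneg hd0 (hB.re_inner_nonneg_left v)
  have hda : d * (inner ℂ (A x) x).re ≤ ‖A‖ * l * ‖e‖ := by
    rw [hexp] at hmain
    rw [hd] at hb ⊢
    linarith
  have hAx : ‖A x‖ ^ 2 ≤ ‖A‖ * (inner ℂ (A x) x).re := by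
    simpa using hA.norm_add_apply_sq_le isPositive_zero x 0
  have hvle : l ^ 2 * ‖v‖ ^ 2 ≤ ‖B‖ ^ 2 * ‖A x‖ ^ 2 := by
    have h := B.le_opNorm (A x)
    rw [hBx, norm_smul, Complex.norm_real, Real.norm_of_nonneg hl0.le] at h
    rw [← mul_pow, ← mul_pow]
    gcongr
  have hfin : d * l ^ 2 * ‖v‖ ^ 2 ≤ ‖B‖ ^ 2 * ‖A‖ ^ 2 * l * ‖e‖ :=
    calc d * l ^ 2 * ‖v‖ ^ 2 = d * (l ^ 2 * ‖v‖ ^ 2) := by ring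
      _ ≤ d * (‖B‖ ^ 2 * (‖A‖ * (inner ℂ (A x) x).re)) :=
        mul_le_mul_of_nonneg_left (hvle.trans (by gcongr)) hd0
      _ = ‖B‖ ^ 2 * ‖A‖ * (d * (inner ℂ (A x) x).re) := by ring
      _ ≤ ‖B‖ ^ 2 * ‖A‖ * (‖A‖ * l * ‖e‖) := by gcongr
      _ = ‖B‖ ^ 2 * ‖A‖ ^ 2 * l * ‖e‖ := by ring
  calc (d * l ^ 2 * ‖v‖ ^ 2) ^ 2 ≤ (‖B‖ ^ 2 * ‖A‖ ^ 2 * l * ‖e‖) ^ 2 := by gcongr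
    _ = (‖B‖ ^ 2 * ‖A‖ ^ 2 * l) ^ 2 * ‖e‖ ^ 2 := by ring
    _ ≤ _ := by gcongr

end ContinuousLinearMap

/-- For positive (semidefinite) operators `A` and `B` on a complex Hilbert space,
the operator norm satisfies `‖A B‖ ≤ (1/4) ‖A + B‖ ^ 2`. -/
theorem norm_mul_le_of_positive
    {H : Type*} [NormedAddCommGroup H] [InnerProductSpace ℂ H] [CompleteSpace H]
    (A B : H →L[ℂ] H) (hA : 0 ≤ A) (hB : 0 ≤ B) :
    ‖A * B‖ ≤ (1 / 4) * ‖A + B‖ ^ 2 := by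
  have hN : ‖B * A‖ = ‖A * B‖ := by
    rw [← norm_star (A * B), star_mul, (IsSelfAdjoint.of_nonneg hA).star_eq,
      (IsSelfAdjoint.of_nonneg hB).star_eq]
  rw [ContinuousLinearMap.nonneg_iff_isPositive] at hA hB
  by_contra! hlt
  set l := ‖A * B‖
  have hl0 : 0 < l := lt_of_le_of_lt (by positivity) hlt
  set d := l - 1 / 4 * ‖A + B‖ ^ 2
  have hd0 : 0 < d := sub_pos.2 hlt
  set K := ‖B‖ ^ 2 * ‖A‖ ^ 2 * l
  have key (u : H) (hu : ‖u‖ ≤ 1) :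
      (d * l ^ 2 * ‖B (A u)‖ ^ 2) ^ 2 ≤ K ^ 2 * (l ^ 2 * (l ^ 2 - ‖B (A u)‖ ^ 2)) :=
    hA.gap_mul_norm_sq_le hB hl0 hd0.le hu
  have hr : ∀ r ∈ Set.Ioo 0 l, (d * l ^ 2 * r ^ 2) ^ 2 ≤ K ^ 2 * (l ^ 2 * (l ^ 2 - r ^ 2)) := by
    rintro r ⟨hr0, hrl⟩
    obtain ⟨u, hu, hru⟩ := (B * A).exists_lt_apply_of_lt_opNorm (hN ▸ hrl)
    have hru' : r ≤ ‖B (A u)‖ := hru.le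
    calc (d * l ^ 2 * r ^ 2) ^ 2 ≤ (d * l ^ 2 * ‖B (A u)‖ ^ 2) ^ 2 := by gcongr
      _ ≤ _ := key u hu.le
      _ ≤ _ := by gcongr
  have hlim : (d * l ^ 2 * l ^ 2) ^ 2 ≤ K ^ 2 * (l ^ 2 * (l ^ 2 - l ^ 2)) := by
    have hc₁ : Continuous fun r : ℝ ↦ (d * l ^ 2 * r ^ 2) ^ 2 := by fun_prop
    have hc₂ : Continuous fun r : ℝ ↦ K ^ 2 * (l ^ 2 * (l ^ 2 - r ^ 2)) := by fun_prop
    refine le_of_tendsto_of_tendsto (b := 𝓝[<] l) (hc₁.continuousWithinAt (x := l))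
      (hc₂.continuousWithinAt (x := l)) ?_
    filter_upwards [Ioo_mem_nhdsLT hl0] with r h
    exact hr r h
  have hpos : 0 < (d * l ^ 2 * l ^ 2) ^ 2 := by positivity
  simp only [sub_self, mul_zero] at hlim
  exact hpos.not_ge hlim
end

section
/- Ando's inequality: for a positive unital linear map Φ, positive invertible operators A, B, and t ∈ [0,1], Φ(A #_t B) ≤ Φ(A) #_t Φ(B). -/
/-- The `t`-weighted geometric mean `A #_t B = A^{1/2} (A^{-1/2} B A^{-1/2})^t A^{1/2}`,
defined via the continuous functional calculus real power. -/
noncomputable def geomMean {H : Type*} [NormedAddCommGroup H] [InnerProductSpace ℂ H]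
    [CompleteSpace H] (A B : H →L[ℂ] H) (t : ℝ) : H →L[ℂ] H :=
  A ^ ((1 : ℝ) / 2) * (A ^ (-(1 : ℝ) / 2) * B * A ^ (-(1 : ℝ) / 2)) ^ t * A ^ ((1 : ℝ) / 2)

section RpowJensen

open Set Filter Topology MeasureTheory
open scoped Ring

/-- Jensen's inequality for the inverse and an operator-valued probability weight `P`. -/
lemma inverse_sum_smul_le_sum_inv_smul {A ι : Type*} [CStarAlgebra A] [PartialOrder A]
    [StarOrderedRing A] (s : Finset ι) (P : ι → A) (w : ι → ℝ) (hP : ∀ i ∈ s, 0 ≤ P i)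
    (hw : ∀ i ∈ s, 0 < w i) (hsum : ∑ i ∈ s, P i = 1)
    (hS : IsStrictlyPositive (∑ i ∈ s, w i • P i)) :
    (∑ i ∈ s, w i • P i)⁻¹ʳ ≤ ∑ i ∈ s, (w i)⁻¹ • P i := by
  set S := ∑ i ∈ s, w i • P i with hSdef
  set T := S⁻¹ʳ with hT
  have hTsa : star T = T := hS.ringInverse.isSelfAdjoint.star_eq
  have hST : S * T = 1 := Ring.mul_inverse_cancel _ hS.isUnit
  have key : ∑ i ∈ s, (w i)⁻¹ • P i - T =
      ∑ i ∈ s, (w i)⁻¹ • (star (1 - w i • T) * P i * (1 - w i • T)) := by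
    have h : ∀ i ∈ s, (w i)⁻¹ • (star (1 - w i • T) * P i * (1 - w i • T)) =
        (w i)⁻¹ • P i - T * P i - P i * T + T * (w i • P i) * T := by
      intro i hi
      have hi' := (hw i hi).ne'
      simp only [star_sub, star_one, star_smul, hTsa, star_trivial, sub_mul, mul_sub, one_mul,
        mul_one, smul_mul_assoc, mul_smul_comm, smul_sub, smul_smul, inv_mul_cancel₀ hi', one_smul]
      rw [inv_mul_cancel_left₀ hi']
      abel
    rw [Finset.sum_congr rfl h, Finset.sum_add_distrib, Finset.sum_sub_distrib,
      Finset.sum_sub_distrib, ← Finset.mul_sum, ← Finset.sum_mul, ← Finset.sum_mul,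
      ← Finset.mul_sum, hsum, ← hSdef, mul_assoc, hST]
    simp
  rw [← sub_nonneg, key]
  exact Finset.sum_nonneg fun i hi ↦
    smul_nonneg (inv_nonneg.2 (hw i hi).le) (star_left_conjugate_nonneg (hP i hi) _)

lemma sum_bernsteinPolynomial_eval_mul (n : ℕ) (y : ℝ) :
    ∑ k : Fin (n + 2), ((k : ℝ) / (n + 1 : ℕ)) * (bernsteinPolynomial ℝ (n + 1) k).eval y = y := by
  have h := congrArg (Polynomial.eval y) (bernsteinPolynomial.sum_smul ℝ (n + 1))
  rw [Finset.sum_range] at h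
  simp only [Polynomial.eval_finsetSum, nsmul_eq_mul,
    Polynomial.eval_mul, Polynomial.eval_natCast, Polynomial.eval_X] at h
  simp_rw [div_mul_eq_mul_div]
  rw [← Finset.sum_div, h]
  field_simp

lemma sum_bernsteinPolynomial_eval (n : ℕ) (y : ℝ) :
    ∑ k : Fin (n + 1), (bernsteinPolynomial ℝ n k).eval y = 1 := by
  have h := congrArg (Polynomial.eval y) (bernsteinPolynomial.sum ℝ n)
  rw [Finset.sum_range] at h
  simpa [Polynomial.eval_finsetSum] using h

namespace PositiveLinearMap

lemma map_smul_real {A B : Type*} [CStarAlgebra A] [PartialOrder A]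
    [CStarAlgebra B] [PartialOrder B] (Φ : A →ₚ[ℂ] B) (r : ℝ) (a : A) : Φ (r • a) = r • Φ a :=
  Φ.toLinearMap.map_smul_of_tower r a

variable {A B : Type*} [CStarAlgebra A] [PartialOrder A] [StarOrderedRing A]
  [CStarAlgebra B] [PartialOrder B] [StarOrderedRing B]

/-- Choi's inequality for the inverse. -/
lemma inverse_map_le_map_inverse (Φ : A →ₚ[ℂ] B) (hΦ : Φ 1 = 1) {a : A} (ha : 0 ≤ a) {s : ℝ}
    (hs : 0 < s) :
    (algebraMap ℝ B s + Φ a)⁻¹ʳ ≤ Φ ((algebraMap ℝ A s + a)⁻¹ʳ) := by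
  set c : ℝ := ‖a‖ * ‖(1 : A)‖ + 1 with hc
  have hc0 : 0 < c := by positivity
  have hΦa : 0 ≤ Φ a := map_nonneg Φ ha
  have hspec : ∀ x ∈ spectrum ℝ a, x / c ∈ unitInterval := by
    intro x hx
    have h0 : 0 ≤ x := spectrum_nonneg_of_nonneg ha hx
    have h1 : x ≤ ‖a‖ * ‖(1 : A)‖ := (le_abs_self x).trans (spectrum.norm_le_norm_mul_of_mem hx)
    exact ⟨by positivity, by rw [div_le_one hc0]; linarith⟩
  let f : C(unitInterval, ℝ) := ⟨fun y ↦ (s + c * y)⁻¹, by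
    refine Continuous.inv₀ (by fun_prop) fun y ↦ ?_
    have := y.2.1
    positivity⟩
  let q (n : ℕ) (k : Fin (n + 2)) (x : ℝ) : ℝ := (bernsteinPolynomial ℝ (n + 1) k).eval (x / c)
  let w (n : ℕ) (k : Fin (n + 2)) : ℝ := s + c * (k / (n + 1 : ℕ))
  have hw (n : ℕ) (k : Fin (n + 2)) : 0 < w n k := by positivity
  have hq (n : ℕ) (k : Fin (n + 2)) : Continuous (q n k) := by fun_prop
  have hq0 (n : ℕ) (k : Fin (n + 2)) : 0 ≤ cfc (q n k) a :=
    cfc_nonneg fun x hx ↦ bernstein_nonneg (n := n + 1) (ν := k) (x := ⟨x / c, hspec x hx⟩)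
  have hq1 (n : ℕ) : ∑ k, cfc (q n k) a = 1 := by
    rw [← cfc_sum_univ (q n) a (fun k ↦ (hq n k).continuousOn), ← cfc_const_one ℝ a]
    exact cfc_congr fun x _ ↦ by simp [q, sum_bernsteinPolynomial_eval]
  have hqw (n : ℕ) : ∑ k, w n k • cfc (q n k) a = algebraMap ℝ A s + a := by
    have h : algebraMap ℝ A s + a = cfc (fun x : ℝ ↦ s + x) a := by
      rw [cfc_const_add .., cfc_id' ..]
    rw [h]
    simp_rw [← cfc_const_mul (w n _) _ a (hq n _).continuousOn]
    rw [← cfc_sum_univ _ a (fun k ↦ ((hq n k).const_mul _).continuousOn)]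
    refine cfc_congr fun x _ ↦ ?_
    have h1 := sum_bernsteinPolynomial_eval (n + 1) (x / c)
    have h2 := sum_bernsteinPolynomial_eval_mul n (x / c)
    simp only [Finset.sum_apply, w, q, add_mul, Finset.sum_add_distrib, ← Finset.mul_sum, mul_assoc]
    rw [h1, h2]
    field_simp
  have hlim : Tendsto (fun n ↦ ∑ k, (w n k)⁻¹ • cfc (q n k) a) atTop
      (𝓝 (algebraMap ℝ A s + a)⁻¹ʳ) := by
    have h : (algebraMap ℝ A s + a)⁻¹ʳ = cfc (fun x : ℝ ↦ (s + x)⁻¹) a := by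
      have hne : ∀ x ∈ spectrum ℝ a, s + x ≠ 0 := fun x hx ↦
        (add_pos_of_pos_of_nonneg hs (spectrum_nonneg_of_nonneg ha hx)).ne'
      rw [cfc_inv _ _ hne .., cfc_const_add .., cfc_id' ..]
    have h' (n : ℕ) : ∑ k, (w n k)⁻¹ • cfc (q n k) a =
        cfc (fun x ↦ ∑ k, (w n k)⁻¹ * q n k x) a := by
      simp_rw [← cfc_const_mul (w n _)⁻¹ _ a (hq n _).continuousOn]
      rw [← cfc_sum_univ _ a (fun k ↦ ((hq n k).const_mul _).continuousOn)]
      exact cfc_congr fun x _ ↦ by simp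
    rw [h]
    simp_rw [h']
    refine tendsto_cfc_fun ?_ (.of_forall fun n ↦ by fun_prop)
    have hB := (tendsto_add_atTop_iff_nat 1).2 (bernsteinApproximation_uniform f)
    rw [ContinuousMap.tendsto_iff_tendstoUniformly] at hB
    rw [Metric.tendstoUniformlyOn_iff]
    rw [Metric.tendstoUniformly_iff] at hB
    intro ε hε
    filter_upwards [hB ε hε] with n hn x hx
    convert hn ⟨x / c, hspec x hx⟩ using 2
    · simp only [f, ContinuousMap.coe_mk]
      field_simp
    · rw [bernsteinApproximation.apply]
      exact Finset.sum_congr rfl fun k _ ↦ mul_comm _ _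
  have hΦc : Continuous Φ := map_continuous Φ
  refine ge_of_tendsto' ((hΦc.tendsto _).comp hlim) fun n ↦ ?_
  have hS : algebraMap ℝ B s + Φ a = ∑ k, w n k • Φ (cfc (q n k) a) := by
    have := congrArg Φ (hqw n)
    simp only [map_sum, map_smul_real, map_add, Algebra.algebraMap_eq_smul_one, hΦ] at this
    rw [this, Algebra.algebraMap_eq_smul_one]
  simp only [Function.comp_apply, map_sum, map_smul_real]
  rw [hS]
  refine inverse_sum_smul_le_sum_inv_smul _ _ _ (fun k _ ↦ map_nonneg Φ (hq0 n k))
    (fun k _ ↦ hw n k) (by rw [← map_sum, hq1, hΦ]) ?_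
  rw [← hS]
  exact IsStrictlyPositive.add_nonneg (by cfc_tac) hΦa

end PositiveLinearMap

namespace CFC
open Real

variable {A : Type*} [CStarAlgebra A] [PartialOrder A] [StarOrderedRing A]

lemma cfc_rpowIntegrand₀₁_eq {p t : ℝ} (ht : 0 < t) {a : A} (ha : 0 ≤ a) :
    cfc (rpowIntegrand₀₁ p t) a = t ^ p • (algebraMap ℝ A t⁻¹ - (algebraMap ℝ A t + a)⁻¹ʳ) := by
  have hne : ∀ x ∈ spectrum ℝ a, t + x ≠ 0 := fun x hx ↦
    (add_pos_of_pos_of_nonneg ht (spectrum_nonneg_of_nonneg ha hx)).ne'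
  have hg : ContinuousOn (fun x : ℝ ↦ (t + x)⁻¹) (spectrum ℝ a) :=
    (continuousOn_const.add continuousOn_id).inv₀ hne
  change cfc (fun x : ℝ ↦ t ^ p * (t⁻¹ - (t + x)⁻¹)) a = _
  rw [cfc_const_mul (t ^ p) (fun x : ℝ ↦ t⁻¹ - (t + x)⁻¹) a ((continuousOn_const (c := t⁻¹)).sub hg), cfc_sub _ _ a continuousOn_const hg,
    cfc_const .., cfc_inv _ _ hne .., cfc_const_add .., cfc_id' ..]

/-- The integral representation of `a ^ p` for `p ∈ (0, 1)`, with respect to a measure which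
does not depend on the algebra. -/
lemma rpow_eq_setIntegral_cfc_rpowIntegrand₀₁ {p : ℝ} (hp : p ∈ Ioo 0 1) {μ : Measure ℝ}
    (hμ : ∀ x ∈ Ici (0 : ℝ), IntegrableOn (fun t => rpowIntegrand₀₁ p t x) (Ioi 0) μ ∧
      x ^ p = ∫ t in Ioi 0, rpowIntegrand₀₁ p t x ∂μ) {a : A} (ha : 0 ≤ a) :
    IntegrableOn (fun t => cfc (rpowIntegrand₀₁ p t) a) (Ioi 0) μ ∧
      a ^ p = ∫ t in Ioi 0, cfc (rpowIntegrand₀₁ p t) a ∂μ := by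
  set M : ℝ := ‖a‖ * ‖(1 : A)‖ with hM
  have hM0 : 0 ≤ M := by positivity
  have hspec : ∀ x ∈ spectrum ℝ a, 0 ≤ x ∧ x ≤ M := fun x hx ↦
    ⟨spectrum_nonneg_of_nonneg ha hx,
      (le_abs_self x).trans (spectrum.norm_le_norm_mul_of_mem hx)⟩
  have hf : ContinuousOn (Function.uncurry (rpowIntegrand₀₁ p)) (Ioi (0 : ℝ) ×ˢ spectrum ℝ a) :=
    continuousOn_rpowIntegrand₀₁_uncurry hp _ fun x hx ↦ (hspec x hx).1
  have hbound : ∀ᵐ t ∂μ.restrict (Ioi 0), ∀ z ∈ spectrum ℝ a,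
      ‖rpowIntegrand₀₁ p t z‖ ≤ ‖rpowIntegrand₀₁ p t M‖ := by
    filter_upwards [ae_restrict_mem measurableSet_Ioi] with t ht z hz
    rw [Real.norm_of_nonneg (rpowIntegrand₀₁_nonneg hp.1 (le_of_lt ht) (hspec z hz).1),
      Real.norm_of_nonneg (rpowIntegrand₀₁_nonneg hp.1 (le_of_lt ht) hM0)]
    exact rpowIntegrand₀₁_monotoneOn hp (le_of_lt ht) (hspec z hz).1 hM0 (hspec z hz).2
  have hfin : HasFiniteIntegral (fun t ↦ ‖rpowIntegrand₀₁ p t M‖) (μ.restrict (Ioi 0)) :=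
    (hasFiniteIntegral_norm_iff _).2 (hμ M hM0).1.2
  refine ⟨integrableOn_cfc measurableSet_Ioi _ _ a hf hbound hfin, ?_⟩
  rw [← cfc_setIntegral measurableSet_Ioi _ _ a hf hbound hfin, rpow_eq_cfc_real]
  exact cfc_congr fun r hr ↦ (hμ r (hspec r hr).1).2

end CFC

namespace PositiveLinearMap
open Real

variable {A B : Type*} [CStarAlgebra A] [PartialOrder A] [StarOrderedRing A]
  [CStarAlgebra B] [PartialOrder B] [StarOrderedRing B]

/-- Operator Jensen inequality for `x ↦ x ^ p`, `p ∈ [0, 1]`, and positive unital maps. -/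
lemma map_rpow_le_rpow_map (Φ : A →ₚ[ℂ] B) (hΦ : Φ 1 = 1) {a : A} (ha : 0 ≤ a) {p : ℝ}
    (hp : p ∈ Icc 0 1) : Φ (a ^ p) ≤ Φ a ^ p := by
  have hΦa : 0 ≤ Φ a := map_nonneg Φ ha
  obtain rfl | hp0 := hp.1.eq_or_lt
  · rw [CFC.rpow_zero a, CFC.rpow_zero (Φ a), hΦ]
  obtain rfl | hp1 := hp.2.eq_or_lt
  · rw [CFC.rpow_one a, CFC.rpow_one (Φ a)]
  have hp' : p ∈ Ioo 0 1 := ⟨hp0, hp1⟩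
  obtain ⟨μ, hμ⟩ := exists_measure_rpow_eq_integral_rpowIntegrand₀₁ hp'
  obtain ⟨hia, hea⟩ := CFC.rpow_eq_setIntegral_cfc_rpowIntegrand₀₁ hp' hμ ha
  obtain ⟨hib, heb⟩ := CFC.rpow_eq_setIntegral_cfc_rpowIntegrand₀₁ hp' hμ hΦa
  let Ψ : A →L[ℂ] B := ⟨Φ.toLinearMap, map_continuous Φ⟩
  have hΨ : ∀ x, Ψ x = Φ x := fun _ ↦ rfl
  rw [hea, heb, ← hΨ, ← Ψ.integral_comp_comm hia]
  refine integral_mono_ae (Ψ.integrable_comp hia) hib ?_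
  filter_upwards [ae_restrict_mem measurableSet_Ioi] with t ht
  have ht : 0 < t := ht
  rw [hΨ, CFC.cfc_rpowIntegrand₀₁_eq ht ha, CFC.cfc_rpowIntegrand₀₁_eq ht hΦa, map_smul_real,
    map_sub, Algebra.algebraMap_eq_smul_one t⁻¹, map_smul_real, hΦ,
    ← Algebra.algebraMap_eq_smul_one]
  gcongr
  exact inverse_map_le_map_inverse Φ hΦ ha ht

end PositiveLinearMap

lemma IsStrictlyPositive.rpow_half_mul_rpow_neg_half {A : Type*} [CStarAlgebra A] [PartialOrder A]
    [StarOrderedRing A] {a : A} (ha : IsStrictlyPositive a) :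
    a ^ ((1 : ℝ) / 2) * a ^ (-(1 : ℝ) / 2) = 1 ∧ a ^ (-(1 : ℝ) / 2) * a ^ ((1 : ℝ) / 2) = 1 ∧
      a ^ ((1 : ℝ) / 2) * a ^ ((1 : ℝ) / 2) = a := by
  rw [neg_div]
  refine ⟨CFC.rpow_mul_rpow_neg _ ha, CFC.rpow_neg_mul_rpow _ ha, ?_⟩
  rw [← CFC.rpow_add ha.isUnit, add_halves, CFC.rpow_one a ha.nonneg]

end RpowJensen

/-- Ando's inequality: for a positive unital linear map `Φ`, positive invertible
operators `A, B` and `t ∈ [0,1]`, one has `Φ(A #ₜ B) ≤ Φ(A) #ₜ Φ(B)`. -/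
theorem ando_inequality
    {H K : Type*} [NormedAddCommGroup H] [InnerProductSpace ℂ H] [CompleteSpace H]
    [NormedAddCommGroup K] [InnerProductSpace ℂ K] [CompleteSpace K]
    (Φ : (H →L[ℂ] H) →ₗ[ℂ] (K →L[ℂ] K))
    (hΦ1 : Φ 1 = 1) (hΦpos : ∀ a : H →L[ℂ] H, 0 ≤ a → 0 ≤ Φ a)
    (A B : H →L[ℂ] H) (hA : 0 ≤ A) (hB : 0 ≤ B)
    (hAinv : Invertible A) (hBinv : Invertible B)
    (t : ℝ) (ht0 : 0 ≤ t) (ht1 : t ≤ 1) :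
    Φ (geomMean A B t) ≤ geomMean (Φ A) (Φ B) t := by
  have hAs : IsStrictlyPositive A := ⟨hA, isUnit_of_invertible A⟩
  have hΦA : IsStrictlyPositive (Φ A) := by
    cases subsingleton_or_nontrivial (H →L[ℂ] H)
    · rw [Subsingleton.elim A 1, hΦ1]
      cfc_tac
    obtain ⟨r, hr, hrA⟩ : ∃ r > 0, algebraMap ℝ (H →L[ℂ] H) r ≤ A :=
      (CFC.exists_pos_algebraMap_le_iff hAs.isSelfAdjoint).2 fun x hx ↦ hAs.spectrum_pos hx
    have h := hΦpos _ (sub_nonneg.2 hrA)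
    rw [map_sub, sub_nonneg, Algebra.algebraMap_eq_smul_one, Φ.map_smul_of_tower, hΦ1,
      ← Algebra.algebraMap_eq_smul_one] at h
    exact IsStrictlyPositive.of_le (by cfc_tac) h
  obtain ⟨hA1, hA2, hA3⟩ := hAs.rpow_half_mul_rpow_neg_half
  obtain ⟨hB1, hB2, hB3⟩ := hΦA.rpow_half_mul_rpow_neg_half
  have hPsa : IsSelfAdjoint (A ^ ((1 : ℝ) / 2)) := .of_nonneg CFC.rpow_nonneg
  have hP'sa : IsSelfAdjoint (A ^ (-(1 : ℝ) / 2)) := .of_nonneg CFC.rpow_nonneg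
  have hQsa : IsSelfAdjoint (Φ A ^ ((1 : ℝ) / 2)) := .of_nonneg CFC.rpow_nonneg
  have hQ'sa : IsSelfAdjoint (Φ A ^ (-(1 : ℝ) / 2)) := .of_nonneg CFC.rpow_nonneg
  unfold geomMean
  set P := A ^ ((1 : ℝ) / 2)
  set P' := A ^ (-(1 : ℝ) / 2)
  set Q := Φ A ^ ((1 : ℝ) / 2)
  set Q' := Φ A ^ (-(1 : ℝ) / 2)
  let Ψ : (H →L[ℂ] H) →ₚ[ℂ] (K →L[ℂ] K) :=
    .mk₀ (LinearMap.mulLeftRight ℂ (Q', Q') ∘ₗ Φ ∘ₗ LinearMap.mulLeftRight ℂ (P, P))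
      fun x hx ↦ hQ'sa.conjugate_nonneg (hΦpos _ (hPsa.conjugate_nonneg hx))
  have hΨ (x : H →L[ℂ] H) : Ψ x = Q' * Φ (P * x * P) * Q' := rfl
  have hΨ1 : Ψ 1 = 1 := by
    rw [hΨ, mul_one, hA3, ← hB3, ← mul_assoc, hB2, one_mul, hB1]
  have hC : P * (P' * B * P') * P = B := by
    rw [← mul_assoc, ← mul_assoc, hA1, one_mul, mul_assoc, hA2, mul_one]
  have h := Ψ.map_rpow_le_rpow_map hΨ1 (hP'sa.conjugate_nonneg hB) ⟨ht0, ht1⟩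
  rw [hΨ (P' * B * P'), hC, hΨ] at h
  have h' := hQsa.conjugate_le_conjugate h
  have hQ (Y : K →L[ℂ] K) : Q * (Q' * Y * Q') * Q = Y := by
    rw [← mul_assoc, ← mul_assoc, hB1, one_mul, mul_assoc, hB2, mul_one]
  rwa [hQ] at h'
end

section
/- Let A, B be positive invertible operators with m·I ≤ A, B ≤ M·I for 0 < m < M, let t ∈ (0,1), and let p ≥ 2. Then ((1−t)A + tB)^p ≤ ((m+M)^{2p}/(16 m^p M^p)) · (A #_t B)^p. -/
open scoped InnerProductSpace

section InnerProduct
variable {H : Type*} [NormedAddCommGroup H] [InnerProductSpace ℂ H] [CompleteSpace H]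

theorem le_one_fourth_of_gram_bound {α β c : ℝ} (hα : 0 ≤ α) (hβ : 0 ≤ β) (hc : c ≤ α * β)
    (h : ∀ k l : ℝ, β * (k * α ^ 2 + l * c) ^ 2 + α * (k * c + l * β ^ 2) ^ 2
      ≤ α * β * (k ^ 2 * α ^ 2 + 2 * k * l * c + l ^ 2 * β ^ 2)) :
    c ≤ 1 / 4 := by
  rcases hα.eq_or_lt with rfl | hα
  · linarith
  rcases hβ.eq_or_lt with rfl | hβ
  · linarith
  have hα1 : α ≤ 1 := by
    have h1 := h 1 0
    have : β * α ^ 3 * α ≤ β * α ^ 3 * 1 := by nlinarith [mul_nonneg hα.le (sq_nonneg c)]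
    exact le_of_mul_le_mul_left this (by positivity)
  have hβ1 : β ≤ 1 := by
    have h1 := h 0 1
    have : α * β ^ 3 * β ≤ α * β ^ 3 * 1 := by nlinarith [mul_nonneg hβ.le (sq_nonneg c)]
    exact le_of_mul_le_mul_left this (by positivity)
  have hE : c ^ 2 + (1 - α) * α * β ^ 2 ≤ (1 - α) * α * β := by
    by_contra! hlt
    have h0 : 0 ≤ (1 - α) * α * β := by
      have := sub_nonneg.2 hα1
      positivity
    have h1 : α * (c ^ 2 + (1 - α) * α * β ^ 2) ^ 2
        ≤ α * ((1 - α) * α * β * (c ^ 2 + (1 - α) * α * β ^ 2)) := by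
      linear_combination h c ((1 - α) * α)
    have h2 := le_of_mul_le_mul_left h1 hα
    nlinarith
  have hα4 : α * (1 - α) ≤ 1 / 4 := by nlinarith [sq_nonneg (α - 1 / 2)]
  have hβ4 : β * (1 - β) ≤ 1 / 4 := by nlinarith [sq_nonneg (β - 1 / 2)]
  have : α * (1 - α) * (β * (1 - β)) ≤ 1 / 4 * (1 / 4) :=
    mul_le_mul hα4 hβ4 (mul_nonneg hβ.le (by linarith)) (by norm_num)
  nlinarith

theorem ContinuousLinearMap.sq_re_inner_apply_le {T : H →L[ℂ] H} (hT : 0 ≤ T) (x z : H) :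
    (⟪T x, z⟫_ℂ).re ^ 2 ≤ (⟪T x, x⟫_ℂ).re * (⟪T z, z⟫_ℂ).re := by
  have hR : IsSelfAdjoint (CFC.sqrt T) := (CFC.sqrt_nonneg T).isSelfAdjoint
  have key (u v : H) : ⟪T u, v⟫_ℂ = ⟪CFC.sqrt T u, CFC.sqrt T v⟫_ℂ := by
    conv_lhs => rw [← CFC.sqrt_mul_sqrt_self T hT, mul_apply_eq_comp]
    exact hR.isSymmetric _ _
  rw [key, key, key]
  have h1 : |(⟪CFC.sqrt T x, CFC.sqrt T z⟫_ℂ).re| ≤ ‖CFC.sqrt T x‖ * ‖CFC.sqrt T z‖ :=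
    (Complex.abs_re_le_norm _).trans (norm_inner_le_norm _ _)
  have h2 (u : H) : (⟪u, u⟫_ℂ).re = ‖u‖ ^ 2 := inner_self_eq_norm_sq (𝕜 := ℂ) u
  rw [h2, h2, ← mul_pow, ← sq_abs]
  gcongr

theorem re_inner_apply_apply_le_of_add_le_one {P Q : H →L[ℂ] H} (hP : 0 ≤ P) (hQ : 0 ≤ Q)
    (hPQ : P + Q ≤ 1) {x y : H} (hx : ‖x‖ = 1) (hy : ‖y‖ = 1) :
    (⟪Q x, P y⟫_ℂ).re ≤ 1 / 4 := by
  have hsq (u : H) : (⟪u, u⟫_ℂ).re = ‖u‖ ^ 2 := inner_self_eq_norm_sq (𝕜 := ℂ) u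
  have hcs (u v : H) : (⟪u, v⟫_ℂ).re ≤ ‖u‖ * ‖v‖ := re_inner_le_norm (𝕜 := ℂ) u v
  have hnn {T : H →L[ℂ] H} (hT : 0 ≤ T) (u : H) : 0 ≤ (⟪T u, u⟫_ℂ).re :=
    ((ContinuousLinearMap.nonneg_iff_isPositive T).1 hT).re_inner_nonneg_left u
  have hsymm (u v : H) : (⟪u, v⟫_ℂ).re = (⟪v, u⟫_ℂ).re := inner_re_symm (𝕜 := ℂ) u v
  refine le_one_fourth_of_gram_bound (norm_nonneg (Q x)) (norm_nonneg (P y)) (hcs _ _) ?_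
  intro k l
  set z : H := (k : ℂ) • Q x + (l : ℂ) • P y with hz
  have hzz : ‖z‖ ^ 2 = k ^ 2 * ‖Q x‖ ^ 2 + 2 * k * l * (⟪Q x, P y⟫_ℂ).re + l ^ 2 * ‖P y‖ ^ 2 := by
    rw [← hsq, hz]
    simp only [inner_add_left, inner_add_right, inner_smul_left, inner_smul_right,
      Complex.conj_ofReal, Complex.add_re, Complex.re_ofReal_mul, hsq, hsymm (P y) (Q x)]
    ring
  have hQz : (⟪Q x, z⟫_ℂ).re = k * ‖Q x‖ ^ 2 + l * (⟪Q x, P y⟫_ℂ).re := by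
    simp only [hz, inner_add_right, inner_smul_right, Complex.add_re, Complex.re_ofReal_mul, hsq]
  have hPz : (⟪P y, z⟫_ℂ).re = k * (⟪Q x, P y⟫_ℂ).re + l * ‖P y‖ ^ 2 := by
    simp only [hz, inner_add_right, inner_smul_right, Complex.add_re, Complex.re_ofReal_mul, hsq,
      hsymm (P y) (Q x)]
  have h1 : (⟪Q x, z⟫_ℂ).re ^ 2 ≤ ‖Q x‖ * (⟪Q z, z⟫_ℂ).re :=
    (ContinuousLinearMap.sq_re_inner_apply_le hQ x z).trans <|
      mul_le_mul_of_nonneg_right ((hcs _ _).trans_eq (by rw [hx, mul_one])) (hnn hQ z)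
  have h2 : (⟪P y, z⟫_ℂ).re ^ 2 ≤ ‖P y‖ * (⟪P z, z⟫_ℂ).re :=
    (ContinuousLinearMap.sq_re_inner_apply_le hP y z).trans <|
      mul_le_mul_of_nonneg_right ((hcs _ _).trans_eq (by rw [hy, mul_one])) (hnn hP z)
  have h3 : (⟪P z, z⟫_ℂ).re + (⟪Q z, z⟫_ℂ).re ≤ ‖z‖ ^ 2 := by
    have := hnn (sub_nonneg.2 hPQ) z
    simp only [sub_apply, add_apply, one_apply_eq_self, inner_sub_left, inner_add_left,
      Complex.sub_re, Complex.add_re, hsq] at this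
    linarith
  rw [← hzz, ← hQz, ← hPz]
  have h4 := mul_le_mul_of_nonneg_left h1 (norm_nonneg (P y))
  have h5 := mul_le_mul_of_nonneg_left h2 (norm_nonneg (Q x))
  have h6 := mul_le_mul_of_nonneg_left h3 (mul_nonneg (norm_nonneg (Q x)) (norm_nonneg (P y)))
  linarith

theorem norm_mul_le_one_fourth_of_add_le_one {P Q : H →L[ℂ] H} (hP : 0 ≤ P) (hQ : 0 ≤ Q)
    (hPQ : P + Q ≤ 1) : ‖P * Q‖ ≤ 1 / 4 := by
  refine ContinuousLinearMap.opNorm_le_of_unit_norm (by norm_num) fun x hx => ?_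
  by_cases h0 : P (Q x) = 0
  · simp [h0]
  have hn : ‖P (Q x)‖ ≠ 0 := norm_ne_zero_iff.2 h0
  have hy : ‖(((‖P (Q x)‖)⁻¹ : ℝ) : ℂ) • P (Q x)‖ = 1 := by
    rw [norm_smul]; simp [hn]
  refine le_trans (le_of_eq ?_) (re_inner_apply_apply_le_of_add_le_one hP hQ hPQ hx hy)
  rw [map_smul, inner_smul_right, Complex.re_ofReal_mul,
    ← ((ContinuousLinearMap.nonneg_iff_isPositive P).1 hP).inner_left_eq_inner_right,
    show (⟪P (Q x), P (Q x)⟫_ℂ).re = ‖P (Q x)‖ ^ 2 from inner_self_eq_norm_sq (𝕜 := ℂ) _,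
    mul_apply_eq_comp]
  field_simp
end InnerProduct

section CStarAlgebra
variable {𝒜 : Type*} [CStarAlgebra 𝒜] [PartialOrder 𝒜] [StarOrderedRing 𝒜]

theorem CFC.smul_rpow {a : 𝒜} (ha : IsStrictlyPositive a) {r : ℝ} (hr : 0 < r) (s : ℝ) :
    (r • a) ^ s = r ^ s • a ^ s := by
  have h0 := ha.nonneg
  have hpos : ∀ x ∈ spectrum ℝ a, 0 < x := fun x hx => ha.spectrum_pos hx
  have hcont : ContinuousOn (fun x : ℝ => x ^ s) (spectrum ℝ a) :=
    continuousOn_id.rpow_const fun x hx => Or.inl (hpos x hx).ne'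
  have hcont' : ContinuousOn (fun x : ℝ => x ^ s) ((r • ·) '' spectrum ℝ a) := by
    rintro _ ⟨x, hx, rfl⟩
    exact (Real.continuousAt_rpow_const _ _
      (Or.inl (mul_pos hr (hpos x hx)).ne')).continuousWithinAt
  rw [CFC.rpow_eq_cfc_real (smul_nonneg hr.le h0), CFC.rpow_eq_cfc_real h0,
    ← cfc_comp_smul r (fun x : ℝ => x ^ s) a hcont', ← cfc_const_mul _ _ _ hcont]
  refine cfc_congr fun x hx => ?_
  simp [Real.mul_rpow hr.le (hpos x hx).le]

theorem CFC.rpow_le_self_of_le_one {a : 𝒜} (h0 : 0 ≤ a) (h1 : a ≤ 1) {r : ℝ} (hr : 1 ≤ r) :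
    a ^ r ≤ a := by
  conv_rhs => rw [← cfc_id' ℝ a]
  rw [CFC.rpow_eq_cfc_real h0]
  have hle : ∀ x ∈ spectrum ℝ a, x ≤ 1 := by
    rw [← map_one (algebraMap ℝ 𝒜)] at h1
    exact (le_algebraMap_iff_spectrum_le (ha := h0.isSelfAdjoint)).1 h1
  refine cfc_mono (fun x hx => ?_) (continuousOn_id.rpow_const fun x _ => Or.inr (by linarith))
    continuousOn_id
  have hx0 := spectrum_nonneg_of_nonneg h0 hx
  simpa using Real.rpow_le_rpow_of_exponent_ge' hx0 (hle x hx) zero_le_one hr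

theorem CFC.rpow_neg_le_smul_one_add {a : 𝒜} (ha : IsStrictlyPositive a) {t : ℝ} (ht0 : 0 ≤ t)
    (ht1 : t ≤ 1) : a ^ (-t) ≤ (1 - t) • (1 : 𝒜) + t • a ^ (-1 : ℝ) := by
  have hpos : ∀ x ∈ spectrum ℝ a, 0 < x := fun x hx => ha.spectrum_pos hx
  have hc (s : ℝ) : ContinuousOn (fun x : ℝ => x ^ s) (spectrum ℝ a) :=
    continuousOn_id.rpow_const fun x hx => Or.inl (hpos x hx).ne'
  have hct : ContinuousOn (fun x : ℝ => t * x ^ (-1 : ℝ)) (spectrum ℝ a) :=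
    continuousOn_const.mul (hc _)
  have hsa := ha.isSelfAdjoint
  rw [CFC.rpow_eq_cfc_real ha.nonneg, CFC.rpow_eq_cfc_real ha.nonneg,
    ← cfc_const_mul t _ a (hc _), ← Algebra.algebraMap_eq_smul_one,
    ← cfc_const_add (1 - t) _ a hct]
  refine cfc_mono (fun x hx => ?_) (hc _) (continuousOn_const.add hct)
  have hx := hpos x hx
  have := Real.geom_mean_le_arith_mean2_weighted (sub_nonneg.2 ht1) ht0 zero_le_one
    (Real.rpow_nonneg hx.le (-1)) (by ring)
  rw [← Real.rpow_mul hx.le] at this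
  simpa using this

theorem CFC.add_smul_rpow_neg_one_le {a : 𝒜} {m M : ℝ} (hm : 0 < m)
    (h1 : m • (1 : 𝒜) ≤ a) (h2 : a ≤ M • (1 : 𝒜)) :
    a + (m * M) • a ^ (-1 : ℝ) ≤ (m + M) • (1 : 𝒜) := by
  have ha : 0 ≤ a := (smul_nonneg hm.le zero_le_one).trans h1
  have hsa := ha.isSelfAdjoint
  rw [← Algebra.algebraMap_eq_smul_one] at h1 h2 ⊢
  have hl := (algebraMap_le_iff_le_spectrum (ha := hsa)).1 h1
  have hu := (le_algebraMap_iff_spectrum_le (ha := hsa)).1 h2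
  have hc : ContinuousOn (fun x : ℝ => x ^ (-1 : ℝ)) (spectrum ℝ a) :=
    continuousOn_id.rpow_const fun x hx => Or.inl (hm.trans_le (hl x hx)).ne'
  have hcm : ContinuousOn (fun x : ℝ => m * M * x ^ (-1 : ℝ)) (spectrum ℝ a) :=
    continuousOn_const.mul hc
  conv_lhs => enter [1]; rw [← cfc_id' ℝ a]
  rw [CFC.rpow_eq_cfc_real ha, ← cfc_const_mul _ _ a hc,
    ← cfc_add a (fun x => x) _ continuousOn_id hcm]
  refine cfc_le_algebraMap _ _ _ (fun x hx => ?_) (continuousOn_id.add hcm) hsa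
  have hx0 := hm.trans_le (hl x hx)
  rw [Real.rpow_neg_one, ← sub_nonneg]
  have : m + M - (x + m * M * x⁻¹) = (x - m) * (M - x) * x⁻¹ := by field_simp; ring
  rw [this]
  have := sub_nonneg.2 (hl x hx)
  have := sub_nonneg.2 (hu x hx)
  positivity

end CStarAlgebra

section Operator
variable {H : Type*} [NormedAddCommGroup H] [InnerProductSpace ℂ H] [CompleteSpace H]

theorem CFC.rpow_neg_one_eq_of_mul_eq_one {a b : H →L[ℂ] H} (ha : IsStrictlyPositive a)
    (h : a * b = 1) : a ^ (-1 : ℝ) = b := by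
  calc a ^ (-1 : ℝ) = a ^ (-1 : ℝ) * (a ^ (1 : ℝ) * b) := by
        rw [CFC.rpow_one a ha.nonneg, h, mul_one]
    _ = b := by rw [← mul_assoc, CFC.rpow_neg_mul_rpow 1 ha, one_mul]

theorem isStrictlyPositive_conj_rpow {A B : H →L[ℂ] H} (hA : IsStrictlyPositive A)
    (hB : IsStrictlyPositive B) (s : ℝ) : IsStrictlyPositive (A ^ s * B * A ^ s) :=
  hB.conjugate_of_isUnit_of_isSelfAdjoint _ _ (hA.rpow _ s).isUnit
    CFC.rpow_nonneg.isSelfAdjoint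

theorem geomMean_isStrictlyPositive {A B : H →L[ℂ] H} (hA : IsStrictlyPositive A)
    (hB : IsStrictlyPositive B) (t : ℝ) : IsStrictlyPositive (geomMean A B t) :=
  isStrictlyPositive_conj_rpow hA
    (IsStrictlyPositive.rpow _ t (isStrictlyPositive_conj_rpow hA hB (-(1 : ℝ) / 2))) (1 / 2)

theorem geomMean_rpow_neg_one_le {A B : H →L[ℂ] H} (hA : IsStrictlyPositive A)
    (hB : IsStrictlyPositive B) {t : ℝ} (ht0 : 0 ≤ t) (ht1 : t ≤ 1) :
    geomMean A B t ^ (-1 : ℝ) ≤ (1 - t) • A ^ (-1 : ℝ) + t • B ^ (-1 : ℝ) := by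
  have hG := geomMean_isStrictlyPositive hA hB t
  have hC : IsStrictlyPositive (A ^ (-(1 : ℝ) / 2) * B * A ^ (-(1 : ℝ) / 2)) :=
    isStrictlyPositive_conj_rpow hA hB _
  set S := A ^ ((1 : ℝ) / 2) with hS
  set R := A ^ (-(1 : ℝ) / 2) with hR
  set C := R * B * R with hCdef
  have hRnn : 0 ≤ R := CFC.rpow_nonneg
  have hSR : S * R = 1 := by
    rw [hS, hR, neg_div]; exact CFC.rpow_mul_rpow_neg _ hA
  have hRS : R * S = 1 := by
    rw [hS, hR, neg_div]; exact CFC.rpow_neg_mul_rpow _ hA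
  have hRR : R * R = A ^ (-1 : ℝ) := by
    rw [hR, ← CFC.rpow_add hA.isUnit]; norm_num
  have hGinv : geomMean A B t ^ (-1 : ℝ) = R * C ^ (-t) * R := by
    refine CFC.rpow_neg_one_eq_of_mul_eq_one hG ?_
    change S * C ^ t * S * (R * C ^ (-t) * R) = 1
    calc S * C ^ t * S * (R * C ^ (-t) * R) = S * C ^ t * (S * R) * C ^ (-t) * R := by noncomm_ring
      _ = S * (C ^ t * C ^ (-t)) * R := by rw [hSR]; noncomm_ring
      _ = 1 := by rw [CFC.rpow_mul_rpow_neg t hC, mul_one, hSR]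
  have hBinv : R * C ^ (-1 : ℝ) * R = B ^ (-1 : ℝ) := by
    refine (CFC.rpow_neg_one_eq_of_mul_eq_one hB ?_).symm
    calc B * (R * C ^ (-1 : ℝ) * R) = (S * R) * B * R * C ^ (-1 : ℝ) * R := by
          rw [hSR]; noncomm_ring
      _ = S * (C ^ (1 : ℝ) * C ^ (-1 : ℝ)) * R := by
          rw [CFC.rpow_one C hC.nonneg, hCdef]; noncomm_ring
      _ = 1 := by rw [CFC.rpow_mul_rpow_neg 1 hC, mul_one, hSR]
  have key := conjugate_le_conjugate_of_nonneg (CFC.rpow_neg_le_smul_one_add hC ht0 ht1) hRnn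
  rw [hGinv]
  refine key.trans_eq ?_
  rw [mul_add, add_mul, mul_smul_comm, smul_mul_assoc, mul_one, hRR, mul_smul_comm, smul_mul_assoc,
    hBinv]

theorem weighted_add_smul_geomMean_rpow_neg_one_le {A B : H →L[ℂ] H} (hA : IsStrictlyPositive A)
    (hB : IsStrictlyPositive B) {m M : ℝ} (hm : 0 < m) (hM : 0 < M)
    (hA1 : m • (1 : H →L[ℂ] H) ≤ A) (hA2 : A ≤ M • (1 : H →L[ℂ] H))
    (hB1 : m • (1 : H →L[ℂ] H) ≤ B) (hB2 : B ≤ M • (1 : H →L[ℂ] H))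
    {t : ℝ} (ht0 : 0 ≤ t) (ht1 : t ≤ 1) :
    (1 - t) • A + t • B + (m * M) • geomMean A B t ^ (-1 : ℝ) ≤ (m + M) • (1 : H →L[ℂ] H) := by
  have h1 := smul_le_smul_of_nonneg_left (CFC.add_smul_rpow_neg_one_le hm hA1 hA2)
    (sub_nonneg.2 ht1)
  have h2 := smul_le_smul_of_nonneg_left (CFC.add_smul_rpow_neg_one_le hm hB1 hB2) ht0
  have h3 := smul_le_smul_of_nonneg_left (geomMean_rpow_neg_one_le hA hB ht0 ht1)
    (mul_pos hm hM).le
  calc (1 - t) • A + t • B + (m * M) • geomMean A B t ^ (-1 : ℝ)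
      ≤ (1 - t) • A + t • B + (m * M) • ((1 - t) • A ^ (-1 : ℝ) + t • B ^ (-1 : ℝ)) := by gcongr
    _ = (1 - t) • (A + (m * M) • A ^ (-1 : ℝ)) + t • (B + (m * M) • B ^ (-1 : ℝ)) := by module
    _ ≤ (1 - t) • (m + M) • (1 : H →L[ℂ] H) + t • (m + M) • (1 : H →L[ℂ] H) := add_le_add h1 h2
    _ = (m + M) • (1 : H →L[ℂ] H) := by module

theorem rpow_two_mul_le_of_add_le_one {P Q : H →L[ℂ] H} (hP : IsStrictlyPositive P)
    (hQ : IsStrictlyPositive Q) (hPQ : P + Q ≤ 1) {r : ℝ} (hr : 1 ≤ r) :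
    P ^ (2 * r) ≤ (1 / 16 : ℝ) • Q ^ (-(2 * r)) := by
  have hP1 : P ≤ 1 := (le_add_of_nonneg_right hQ.nonneg).trans hPQ
  have hQ1 : Q ≤ 1 := (le_add_of_nonneg_left hP.nonneg).trans hPQ
  have hn : ‖P ^ r * Q ^ r‖ ≤ 1 / 4 :=
    norm_mul_le_one_fourth_of_add_le_one CFC.rpow_nonneg CFC.rpow_nonneg <|
      (add_le_add (CFC.rpow_le_self_of_le_one hP.nonneg hP1 hr)
        (CFC.rpow_le_self_of_le_one hQ.nonneg hQ1 hr)).trans hPQ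
  have hs (T : H →L[ℂ] H) (s : ℝ) : star (T ^ s) = T ^ s :=
    (CFC.rpow_nonneg : 0 ≤ T ^ s).isSelfAdjoint.star_eq
  have hle : Q ^ r * P ^ (2 * r) * Q ^ r ≤ (1 / 16 : ℝ) • (1 : H →L[ℂ] H) := by
    have h1 := CStarAlgebra.star_mul_le_algebraMap_norm_sq (a := P ^ r * Q ^ r)
    rw [star_mul, hs, hs, Algebra.algebraMap_eq_smul_one] at h1
    calc Q ^ r * P ^ (2 * r) * Q ^ r = Q ^ r * P ^ r * (P ^ r * Q ^ r) := by
          rw [two_mul, CFC.rpow_add hP.isUnit]; noncomm_ring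
      _ ≤ ‖P ^ r * Q ^ r‖ ^ 2 • (1 : H →L[ℂ] H) := h1
      _ ≤ (1 / 16 : ℝ) • (1 : H →L[ℂ] H) := by
          refine smul_le_smul_of_nonneg_right ?_ zero_le_one
          nlinarith [norm_nonneg (P ^ r * Q ^ r)]
  have h2 := conjugate_le_conjugate_of_nonneg hle (CFC.rpow_nonneg : 0 ≤ Q ^ (-r))
  calc P ^ (2 * r) = Q ^ (-r) * Q ^ r * P ^ (2 * r) * (Q ^ r * Q ^ (-r)) := by
        rw [CFC.rpow_neg_mul_rpow r hQ, CFC.rpow_mul_rpow_neg r hQ, one_mul, mul_one]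
    _ = Q ^ (-r) * (Q ^ r * P ^ (2 * r) * Q ^ r) * Q ^ (-r) := by noncomm_ring
    _ ≤ Q ^ (-r) * ((1 / 16 : ℝ) • (1 : H →L[ℂ] H)) * Q ^ (-r) := h2
    _ = (1 / 16 : ℝ) • Q ^ (-(2 * r)) := by
        rw [mul_smul_comm, smul_mul_assoc, mul_one, ← CFC.rpow_add hQ.isUnit]
        ring_nf

end Operator

/-- For positive invertible `A, B` with `m • 1 ≤ A, B ≤ M • 1`, `0 < m < M`,
`t ∈ (0,1)` and real `p ≥ 2`,
`((1-t)A + tB)^p ≤ ((m+M)^{2p}/(16 m^p M^p)) • (A #ₜ B)^p`. -/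
theorem weighted_arith_rpow_le_geomMean_rpow
    {H : Type*} [NormedAddCommGroup H] [InnerProductSpace ℂ H] [CompleteSpace H]
    (A B : H →L[ℂ] H) (hA : 0 ≤ A) (hB : 0 ≤ B)
    (hAinv : Invertible A) (hBinv : Invertible B)
    (m M : ℝ) (hm : 0 < m) (hmM : m < M)
    (hA1 : m • (1 : H →L[ℂ] H) ≤ A) (hA2 : A ≤ M • (1 : H →L[ℂ] H))
    (hB1 : m • (1 : H →L[ℂ] H) ≤ B) (hB2 : B ≤ M • (1 : H →L[ℂ] H))
    (t : ℝ) (ht0 : 0 < t) (ht1 : t < 1) (p : ℝ) (hp : 2 ≤ p) :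
    ((1 - t) • A + t • B) ^ p
      ≤ ((m + M) ^ (2 * p) / (16 * m ^ p * M ^ p)) • geomMean A B t ^ p := by
  have hA' : IsStrictlyPositive A := (isUnit_of_invertible A).isStrictlyPositive hA
  have hB' : IsStrictlyPositive B := (isUnit_of_invertible B).isStrictlyPositive hB
  have hM : 0 < M := hm.trans hmM
  have hc : 0 < m + M := add_pos hm hM
  have hmul : 0 < m * M := mul_pos hm hM
  have hX : IsStrictlyPositive ((1 - t) • A + t • B) :=
    (hA'.smul (sub_pos.2 ht1)).add_nonneg (smul_nonneg ht0.le hB)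
  have hG := geomMean_isStrictlyPositive hA' hB' t
  have hG' : IsStrictlyPositive (geomMean A B t ^ (-1 : ℝ)) := hG.rpow _ _
  have hsum := weighted_add_smul_geomMean_rpow_neg_one_le hA' hB' hm hM hA1 hA2 hB1 hB2
    ht0.le ht1.le
  set X := (1 - t) • A + t • B
  set G := geomMean A B t
  have hsum' : (m + M)⁻¹ • X + ((m + M)⁻¹ * (m * M)) • G ^ (-1 : ℝ) ≤ 1 := by
    have := smul_le_smul_of_nonneg_left hsum (inv_pos.2 hc).le
    rwa [smul_add, smul_smul, smul_smul, inv_mul_cancel₀ hc.ne', one_smul] at this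
  have hk : 0 < (m + M)⁻¹ * (m * M) := by positivity
  have key := rpow_two_mul_le_of_add_le_one (hX.smul (inv_pos.2 hc)) (hG'.smul hk) hsum'
    (r := p / 2) (by linarith)
  rw [mul_div_cancel₀ p two_ne_zero, CFC.smul_rpow hX (inv_pos.2 hc),
    CFC.smul_rpow hG' hk, CFC.rpow_rpow _ _ _ (by norm_num) hG, neg_mul_neg, one_mul,
    smul_smul] at key
  have h1 := smul_le_smul_of_nonneg_left key (Real.rpow_nonneg hc.le p)
  rw [smul_smul, smul_smul, ← Real.mul_rpow hc.le (inv_pos.2 hc).le, mul_inv_cancel₀ hc.ne',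
    Real.one_rpow, one_smul] at h1
  refine h1.trans_eq ?_
  congr 1
  rw [Real.rpow_neg hk.le, Real.mul_rpow (inv_pos.2 hc).le hmul.le, Real.mul_rpow hm.le hM.le,
    Real.inv_rpow hc.le, two_mul, Real.rpow_add hc]
  have := Real.rpow_pos_of_pos hc p
  have := Real.rpow_pos_of_pos hm p
  have := Real.rpow_pos_of_pos hM p
  field_simp
end
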